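/- Suppose there exist θ^L < θ^H in (0,1) such that, wherever u'' exists, u''(θ) < 0 for θ ∈ [0,θ^L), u''(θ) > 0 for θ ∈ (θ^L,θ^H), and u''(θ) < 0 for θ ∈ (θ^H,1]. If there exist θ_*^L < θ_*^H in (θ^L,θ^H) such that u(m_*^L) + u'(m_*^L)·(θ_*^L − m_*^L) = u(θ_*^L) and u(m_*^H) + u'(m_*^H)·(θ_*^H − m_*^H) = u(θ_*^H), where m_*^L = E_F[θ|(0,θ_*^L)] and m_*^H = E_F[θ|(θ_*^H,1)], then the open pooling set P_* = [0,θ_*^L) ∪ (θ_*^H,1] is optimal for u; moreover m_*^L ∈ (0,θ^L) and m_*^H ∈ (θ^H,1). -/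

import Mathlib

open MeasureTheory Set
open scoped Classical

noncomputable section

/-- CDF associated with the density `f` (relevant on `[0,1]`): `F(x) = ∫_0^x f`. -/
def cdfF (f : ℝ → ℝ) (x : ℝ) : ℝ := ∫ t in (0:ℝ)..x, f t

/-- Conditional mean `E_F[θ | (ξ,ζ)]` of `θ` on the interval `(ξ, ζ)` under density `f`. -/
def condMean (f : ℝ → ℝ) (ξ ζ : ℝ) : ℝ :=
  (∫ t in ξ..ζ, t * f t) / (∫ t in ξ..ζ, f t)

/-- `f` is a strictly positive density of a probability measure on `[0,1]`. -/
def IsDensity (f : ℝ → ℝ) : Prop :=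
  (∀ θ ∈ Icc (0:ℝ) 1, 0 < f θ) ∧ IntegrableOn f (Icc (0:ℝ) 1) ∧
    (∫ t in (0:ℝ)..1, f t) = 1

/-- An open pooling set: a relatively open subset of `[0,1]`. -/
def IsPoolingSet (P : Set ℝ) : Prop :=
  ∃ U : Set ℝ, IsOpen U ∧ P = U ∩ Icc (0:ℝ) 1

/-- Left endpoint `ξ_i` of the interval component of `θ` in `P`. -/
def compInf (P : Set ℝ) (θ : ℝ) : ℝ := sInf (connectedComponentIn P θ)

/-- Right endpoint `ζ_i` of the interval component of `θ` in `P`. -/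
def compSup (P : Set ℝ) (θ : ℝ) : ℝ := sSup (connectedComponentIn P θ)

/-- The posterior-mean map induced by the pooling set `P`: states in a pooled
interval are mapped to the conditional mean of that interval, other states to
themselves. -/
def poolMean (f : ℝ → ℝ) (P : Set ℝ) (θ : ℝ) : ℝ :=
  if θ ∈ P then condMean f (compInf P θ) (compSup P θ) else θ

/-- The induced distribution `G_P` of posterior means. -/
def Gp (f : ℝ → ℝ) (P : Set ℝ) (θ : ℝ) : ℝ :=
  if θ ∈ P then
    (if θ < condMean f (compInf P θ) (compSup P θ) then cdfF f (compInf P θ)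
     else cdfF f (compSup P θ))
  else cdfF f θ

/-- `Γ_P(θ) = ∫_0^θ G_P(t) dt`. -/
def Gam (f : ℝ → ℝ) (P : Set ℝ) (θ : ℝ) : ℝ := ∫ t in (0:ℝ)..θ, Gp f P t

/-- The value `∫_0^1 u(θ) dG_P(θ)` of the pooling set `P` under payoff `u`,
written as the expectation of `u` composed with the posterior-mean map. -/
def poolValue (f : ℝ → ℝ) (u : ℝ → ℝ) (P : Set ℝ) : ℝ :=
  ∫ θ in (0:ℝ)..1, u (poolMean f P θ) * f θ

/-- `P` is an optimal pooling set for `u`. -/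
def IsOptimal (f : ℝ → ℝ) (u : ℝ → ℝ) (P : Set ℝ) : Prop :=
  IsPoolingSet P ∧ ∀ Q : Set ℝ, IsPoolingSet Q → poolValue f u Q ≤ poolValue f u P

/-- `u` is continuously differentiable on `[0,1]` with derivative `u'`, and `u'`
is absolutely continuous with integrable a.e. derivative `u''` (encoded via the
fundamental theorem of calculus). -/
def C1AC (u u' u'' : ℝ → ℝ) : Prop :=
  (∀ θ ∈ Icc (0:ℝ) 1, HasDerivAt u (u' θ) θ) ∧
  ContinuousOn u' (Icc (0:ℝ) 1) ∧
  IntegrableOn u'' (Icc (0:ℝ) 1) ∧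
  (∀ θ ∈ Icc (0:ℝ) 1, u' θ = u' 0 + ∫ t in (0:ℝ)..θ, u'' t)

lemma tan_lt {u u' : ℝ → ℝ} {a b : ℝ} (hd : ∀ x ∈ Icc a b, HasDerivAt u (u' x) x)
    (hm : StrictMonoOn u' (Icc a b)) {x y : ℝ} (hx : x ∈ Icc a b) (hy : y ∈ Icc a b)
    (hxy : x ≠ y) : u x + u' x * (y - x) < u y := by
  have key : ∀ p q, p ∈ Icc a b → q ∈ Icc a b → p < q →
      ∃ c ∈ Ioo p q, u' c = (u q - u p) / (q - p) := by
    intro p q hp hq hpq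
    have hsub : Icc p q ⊆ Icc a b := Icc_subset_Icc hp.1 hq.2
    exact exists_hasDerivAt_eq_slope u u' hpq
      (fun z hz => (hd z (hsub hz)).continuousAt.continuousWithinAt)
      (fun z hz => hd z (hsub (Ioo_subset_Icc_self hz)))
  rcases lt_or_gt_of_ne hxy with h | h
  · obtain ⟨c, hc, he⟩ := key x y hx hy h
    have := hm hx ⟨hx.1.trans hc.1.le, hc.2.le.trans hy.2⟩ hc.1
    rw [eq_div_iff (by linarith)] at he
    nlinarith
  · obtain ⟨c, hc, he⟩ := key y x hy hx h
    have := hm ⟨hy.1.trans hc.1.le, hc.2.le.trans hx.2⟩ hx hc.2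
    rw [eq_div_iff (by linarith)] at he
    nlinarith

lemma tan_gt {u u' : ℝ → ℝ} {a b : ℝ} (hd : ∀ x ∈ Icc a b, HasDerivAt u (u' x) x)
    (hm : StrictAntiOn u' (Icc a b)) {x y : ℝ} (hx : x ∈ Icc a b) (hy : y ∈ Icc a b)
    (hxy : x ≠ y) : u y < u x + u' x * (y - x) := by
  have := tan_lt (u := fun x => - u x) (u' := fun x => - u' x) (a := a) (b := b)
    (fun x hx => (hd x hx).neg) (fun p hp q hq h => neg_lt_neg (hm hp hq h)) hx hy hxy
  linarith

/-- Chord inequality from tangent inequalities. -/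
lemma chord_le {A B s k t v w m : ℝ} (hkt : k ≤ t) (hts : t ≤ s) (hks : k < s)
    (h1 : v + w * (k - t) ≤ A + B * (k - m)) (h2 : v + w * (s - t) ≤ A + B * (s - m)) :
    v ≤ A + B * (t - m) := by
  have e1 := mul_le_mul_of_nonneg_left h1 (sub_nonneg.2 hts)
  have e2 := mul_le_mul_of_nonneg_left h2 (sub_nonneg.2 hkt)
  have : v * (s - k) ≤ (A + B * (t - m)) * (s - k) := by nlinarith
  exact le_of_mul_le_mul_right this (by linarith)

section density

variable {f : ℝ → ℝ}

lemma ii_of {g : ℝ → ℝ} (hg : IntegrableOn g (Icc (0:ℝ) 1)) {a b : ℝ} (ha : 0 ≤ a) (hab : a ≤ b)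
    (hb : b ≤ 1) : IntervalIntegrable g volume a b := by
  rw [intervalIntegrable_iff_integrableOn_Icc_of_le hab]
  exact hg.mono_set (Icc_subset_Icc ha hb)

lemma io_mul (hf : IsDensity f) {g : ℝ → ℝ} (hg : ContinuousOn g (Icc (0:ℝ) 1)) :
    IntegrableOn (fun x => g x * f x) (Icc (0:ℝ) 1) :=
  hf.2.1.continuousOn_mul hg isCompact_Icc

lemma mass_pos (hf : IsDensity f) {a b : ℝ} (ha : 0 ≤ a) (hab : a < b)
    (hb : b ≤ 1) : 0 < ∫ t in a..b, f t :=
  intervalIntegral.intervalIntegral_pos_of_pos_on (ii_of hf.2.1 ha hab.le hb)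
    (fun x hx => hf.1 x ⟨by linarith [hx.1], by linarith [hx.2]⟩) hab

/-- Integral of an affine function against the density. -/
lemma affine_int (hf : IsDensity f) {a b : ℝ} (ha : 0 ≤ a) (hab : a < b)
    (hb : b ≤ 1) (A B : ℝ) :
    (∫ t in a..b, (A + B * (t - condMean f a b)) * f t) = A * ∫ t in a..b, f t := by
  have hm := mass_pos hf ha hab hb
  have hi := ii_of hf.2.1 ha hab.le hb
  have hi2 := ii_of (io_mul hf (g := fun x => x) continuousOn_id) ha hab.le hb
  have : ∀ t, (A + B * (t - condMean f a b)) * f t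
      = (A - B * condMean f a b) * f t + B * (t * f t) := by intro t; ring
  simp_rw [this]
  rw [intervalIntegral.integral_add (hi.const_mul _) (hi2.const_mul B),
    intervalIntegral.integral_const_mul, intervalIntegral.integral_const_mul]
  have : condMean f a b * (∫ t in a..b, f t) = ∫ t in a..b, t * f t := by
    unfold condMean; field_simp
  rw [← this]; ring

lemma condMean_mem (hf : IsDensity f) {a b : ℝ} (ha : 0 ≤ a) (hab : a < b)
    (hb : b ≤ 1) : condMean f a b ∈ Ioo a b := by
  have hm := mass_pos hf ha hab hb
  have hi := ii_of hf.2.1 ha hab.le hb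
  have hi2 := ii_of (io_mul hf (g := fun x => x) continuousOn_id) ha hab.le hb
  have fp : ∀ x ∈ Ioo a b, 0 < f x :=
    fun x hx => hf.1 x ⟨by linarith [hx.1], by linarith [hx.2]⟩
  have h1 : 0 < ∫ t in a..b, (t * f t - a * f t) :=
    intervalIntegral.intervalIntegral_pos_of_pos_on (hi2.sub (hi.const_mul a))
      (fun x hx => by have := mul_pos (sub_pos.2 hx.1) (fp x hx); linarith) hab
  have h2 : 0 < ∫ t in a..b, (b * f t - t * f t) :=
    intervalIntegral.intervalIntegral_pos_of_pos_on ((hi.const_mul b).sub hi2)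
      (fun x hx => by have := mul_pos (sub_pos.2 hx.2) (fp x hx); linarith) hab
  rw [intervalIntegral.integral_sub hi2 (hi.const_mul a),
    intervalIntegral.integral_const_mul] at h1
  rw [intervalIntegral.integral_sub (hi.const_mul b) hi2,
    intervalIntegral.integral_const_mul] at h2
  constructor
  · rw [condMean, lt_div_iff₀ hm]; linarith
  · rw [condMean, div_lt_iff₀ hm]; linarith

lemma comp_facts {Q : Set ℝ} (hQ : IsPoolingSet Q) {x : ℝ} (hx : x ∈ Q) :
    0 ≤ compInf Q x ∧ compInf Q x < compSup Q x ∧ compSup Q x ≤ 1 ∧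
    Ioo (compInf Q x) (compSup Q x) ⊆ connectedComponentIn Q x ∧
    connectedComponentIn Q x ⊆ Icc (compInf Q x) (compSup Q x) := by
  obtain ⟨U, hU, rfl⟩ := hQ
  set C := connectedComponentIn (U ∩ Icc (0:ℝ) 1) x with hC
  have hCsub : C ⊆ Icc (0:ℝ) 1 := (connectedComponentIn_subset _ _).trans inter_subset_right
  have hconn : IsConnected C := isConnected_connectedComponentIn_iff.2 hx
  have hbb : BddBelow C := ⟨0, fun y hy => (hCsub hy).1⟩
  have hba : BddAbove C := ⟨1, fun y hy => (hCsub hy).2⟩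
  have hxC : x ∈ C := mem_connectedComponentIn hx
  have hsubI : C ⊆ Icc (sInf C) (sSup C) := subset_Icc_csInf_csSup hbb hba
  refine ⟨le_csInf ⟨x, hxC⟩ fun y hy => (hCsub hy).1, ?_,
    csSup_le ⟨x, hxC⟩ fun y hy => (hCsub hy).2,
    hconn.Ioo_csInf_csSup_subset hbb hba, hsubI⟩
  obtain ⟨ε, hε, hball⟩ := Metric.isOpen_iff.1 hU x hx.1
  rw [Real.ball_eq_Ioo] at hball
  have hsub : Ioo (x - ε) (x + ε) ∩ Icc 0 1 ⊆ C :=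
    IsPreconnected.subset_connectedComponentIn
      ((ordConnected_Ioo.inter ordConnected_Icc).isPreconnected)
      ⟨⟨by linarith, by linarith⟩, hx.2⟩ (inter_subset_inter_left _ hball)
  have hx01 := hx.2
  have : ∃ y ∈ C, y ≠ x := by
    rcases lt_or_ge x 1 with h | h
    · refine ⟨min (x + ε / 2) 1, hsub ⟨⟨?_, ?_⟩, ?_, ?_⟩, ?_⟩
      · exact lt_min (by linarith) (by linarith)
      · exact (min_le_left _ _).trans_lt (by linarith)
      · exact le_min (by linarith [hx01.1]) (by linarith)
      · exact min_le_right _ _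
      · exact (lt_min (by linarith) h).ne'
    · refine ⟨max (x - ε / 2) 0, hsub ⟨⟨?_, ?_⟩, ?_, ?_⟩, ?_⟩
      · exact (lt_max_of_lt_left (by linarith))
      · exact max_lt (by linarith) (by linarith)
      · exact le_max_right _ _
      · exact max_le (by linarith [hx01.2]) (by linarith)
      · exact (max_lt (by linarith) (by linarith)).ne
  obtain ⟨y, hy, hyx⟩ := this
  have h1 := hsubI hy
  have h2 := hsubI hxC
  rcases lt_or_gt_of_ne hyx with h | h
  · exact (h1.1.trans_lt h).trans_le h2.2
  · exact (h2.1.trans_lt h).trans_le h1.2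

lemma comps_countable {Q : Set ℝ} (hQ : IsPoolingSet Q) :
    {C : Set ℝ | ∃ x ∈ Q, C = connectedComponentIn Q x}.Countable := by
  refine (countable_range (fun q : ℚ => connectedComponentIn Q (q:ℝ))).mono ?_
  rintro C ⟨x, hx, rfl⟩
  obtain ⟨_, h2, _, h4, _⟩ := comp_facts hQ hx
  obtain ⟨q, hq1, hq2⟩ := exists_rat_btwn h2
  exact ⟨q, (connectedComponentIn_eq (h4 ⟨hq1, hq2⟩)).symm⟩

lemma comps_union (Q : Set ℝ) :
    (⋃ C : {C : Set ℝ | ∃ x ∈ Q, C = connectedComponentIn Q x}, (C : Set ℝ)) = Q := by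
  ext y
  simp only [mem_iUnion]
  constructor
  · rintro ⟨⟨C, x, hx, rfl⟩, hy⟩
    exact connectedComponentIn_subset _ _ hy
  · intro hy
    exact ⟨⟨_, y, hy, rfl⟩, mem_connectedComponentIn hy⟩

lemma poolMean_comp {Q : Set ℝ} {x y : ℝ} (hy : y ∈ connectedComponentIn Q x) :
    poolMean f Q y = condMean f (compInf Q x) (compSup Q x) := by
  have hyQ := connectedComponentIn_subset _ _ hy
  rw [poolMean, if_pos hyQ, compInf, compSup, ← connectedComponentIn_eq hy]
  rfl

lemma poolMean_mem (hf : IsDensity f) {Q : Set ℝ} (hQ : IsPoolingSet Q) {x : ℝ}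
    (hx : x ∈ Icc (0:ℝ) 1) : poolMean f Q x ∈ Icc (0:ℝ) 1 := by
  by_cases h : x ∈ Q
  · obtain ⟨h1, h2, h3, _, _⟩ := comp_facts hQ h
    have := condMean_mem hf h1 h2 h3
    rw [poolMean, if_pos h]
    exact ⟨by linarith [this.1], by linarith [this.2]⟩
  · rwa [poolMean, if_neg h]

lemma pool_meas {Q : Set ℝ} (hQ : IsPoolingSet Q) : MeasurableSet Q := by
  obtain ⟨U, hU, rfl⟩ := hQ
  exact hU.measurableSet.inter measurableSet_Icc

lemma comp_meas (Q : Set ℝ) (x : ℝ) : MeasurableSet (connectedComponentIn Q x) :=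
  isPreconnected_connectedComponentIn.ordConnected.measurableSet

lemma pool_integrable (hf : IsDensity f) {u : ℝ → ℝ} (hu : ContinuousOn u (Icc (0:ℝ) 1))
    {Q : Set ℝ} (hQ : IsPoolingSet Q) :
    IntegrableOn (fun θ => u (poolMean f Q θ) * f θ) (Icc (0:ℝ) 1) := by
  obtain ⟨K, hK⟩ := isCompact_Icc.exists_bound_of_continuousOn hu
  refine Integrable.bdd_mul (c := K) hf.2.1 ?_
    (ae_restrict_of_forall_mem measurableSet_Icc fun x hx => hK _ (poolMean_mem hf hQ hx))
  have hsub : Q ⊆ Icc 0 1 := by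
    obtain ⟨U, _, rfl⟩ := hQ
    exact inter_subset_right
  rw [← union_sdiff_cancel hsub, aestronglyMeasurable_union_iff]
  constructor
  · have := (comps_countable hQ).to_subtype
    have key : AEStronglyMeasurable (fun θ => u (poolMean f Q θ)) (volume.restrict
      (⋃ C : {C : Set ℝ | ∃ x ∈ Q, C = connectedComponentIn Q x}, (C : Set ℝ))) := by
      rw [aestronglyMeasurable_iUnion_iff]
      rintro ⟨C, x, hx, rfl⟩
      refine (aestronglyMeasurable_const
        (b := u (condMean f (compInf Q x) (compSup Q x)))).congr ?_
      refine ae_restrict_of_forall_mem (comp_meas _ _) fun y hy => ?_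
      simp only [poolMean_comp hy]
    rwa [comps_union] at key
  · have hm : MeasurableSet (Icc (0:ℝ) 1 \ Q) := measurableSet_Icc.diff (pool_meas hQ)
    refine ((hu.mono sdiff_subset).aestronglyMeasurable hm).congr ?_
    refine ae_restrict_of_forall_mem hm fun y hy => ?_
    simp only [poolMean, if_neg hy.2]

lemma pool_le (hf : IsDensity f) {u p : ℝ → ℝ} (hu : ContinuousOn u (Icc (0:ℝ) 1))
    (hp : IntegrableOn (fun θ => p θ * f θ) (Icc (0:ℝ) 1))
    (H : ∀ m ∈ Icc (0:ℝ) 1, ∃ s, ∀ θ ∈ Icc (0:ℝ) 1, u m + s * (θ - m) ≤ p θ)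
    {Q : Set ℝ} (hQ : IsPoolingSet Q) :
    poolValue f u Q ≤ ∫ θ in (0:ℝ)..1, p θ * f θ := by
  have hsub : Q ⊆ Icc 0 1 := by
    obtain ⟨U, _, rfl⟩ := hQ
    exact inter_subset_right
  have hint := pool_integrable hf hu hQ
  rw [poolValue, intervalIntegral.integral_of_le zero_le_one,
    intervalIntegral.integral_of_le zero_le_one, ← integral_Icc_eq_integral_Ioc,
    ← integral_Icc_eq_integral_Ioc]
  have hm : MeasurableSet (Icc (0:ℝ) 1 \ Q) := measurableSet_Icc.diff (pool_meas hQ)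
  rw [← union_sdiff_cancel hsub, setIntegral_union disjoint_sdiff_right hm (hint.mono_set hsub)
      (hint.mono_set sdiff_subset),
    setIntegral_union disjoint_sdiff_right hm (hp.mono_set hsub) (hp.mono_set sdiff_subset)]
  refine add_le_add ?_ ?_
  · have := (comps_countable hQ).to_subtype
    have hmC : ∀ C : {C : Set ℝ | ∃ x ∈ Q, C = connectedComponentIn Q x},
        MeasurableSet (C : Set ℝ) := by
      rintro ⟨C, x, hx, rfl⟩
      exact comp_meas _ _
    have hdC : Pairwise (Function.onFun Disjoint
        (fun C : {C : Set ℝ | ∃ x ∈ Q, C = connectedComponentIn Q x} => (C : Set ℝ))) := by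
      rintro ⟨C, x, hx, rfl⟩ ⟨D, y, hy, rfl⟩ hne
      simp only [Function.onFun]
      rw [Set.disjoint_left]
      intro z hz hz2
      apply hne
      simp only [Subtype.mk.injEq]
      rw [connectedComponentIn_eq hz, connectedComponentIn_eq hz2]
    have s1 := hasSum_integral_iUnion (μ := volume) hmC hdC
      (f := fun θ => u (poolMean f Q θ) * f θ) (by rw [comps_union]; exact hint.mono_set hsub)
    have s2 := hasSum_integral_iUnion (μ := volume) hmC hdC
      (f := fun θ => p θ * f θ) (by rw [comps_union]; exact hp.mono_set hsub)
    rw [comps_union] at s1 s2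
    refine hasSum_le ?_ s1 s2
    rintro ⟨C, x, hx, rfl⟩
    simp only
    obtain ⟨h1, h2, h3, h4, h5⟩ := comp_facts hQ hx
    set a := compInf Q x
    set b := compSup Q x
    have hae : (connectedComponentIn Q x : Set ℝ) =ᵐ[volume] Ioc a b := by
      have e1 : (connectedComponentIn Q x) ≤ᵐ[volume] Ioc a b :=
        (HasSubset.Subset.eventuallyLE h5).trans Ioc_ae_eq_Icc.symm.le
      have e2 : Ioc a b ≤ᵐ[volume] (connectedComponentIn Q x) :=
        Ioo_ae_eq_Ioc.symm.le.trans (HasSubset.Subset.eventuallyLE h4)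
      exact e1.antisymm e2
    have hl : ∫ θ in connectedComponentIn Q x, u (poolMean f Q θ) * f θ
        = ∫ θ in connectedComponentIn Q x, u (condMean f a b) * f θ :=
      setIntegral_congr_fun (comp_meas _ _) fun y hy => by
        simp only [poolMean_comp hy]; rfl
    rw [hl, setIntegral_congr_set hae, setIntegral_congr_set hae,
      ← intervalIntegral.integral_of_le h2.le, ← intervalIntegral.integral_of_le h2.le,
      intervalIntegral.integral_const_mul]
    have hcm := condMean_mem hf h1 h2 h3
    obtain ⟨s, hs⟩ := H (condMean f a b) ⟨by linarith [hcm.1], by linarith [hcm.2]⟩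
    rw [← affine_int hf h1 h2 h3 (u (condMean f a b)) s]
    refine intervalIntegral.integral_mono_on h2.le
      (ii_of (io_mul hf (by fun_prop)) h1 h2.le h3) (ii_of hp h1 h2.le h3) fun y hy => ?_
    have hy01 : y ∈ Icc (0:ℝ) 1 := ⟨h1.trans hy.1, hy.2.trans h3⟩
    exact mul_le_mul_of_nonneg_right (hs y hy01) (hf.1 y hy01).le
  · refine setIntegral_mono_on (hint.mono_set sdiff_subset) (hp.mono_set sdiff_subset) hm ?_
    intro y hy
    obtain ⟨s, hs⟩ := H y hy.1
    have := hs y hy.1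
    rw [poolMean, if_neg hy.2]
    exact mul_le_mul_of_nonneg_right (by simpa using this) (hf.1 y hy.1).le

end density

lemma comp_left {a b x : ℝ} (ha : 0 < a) (hab : a < b) (hx : x ∈ Ico (0:ℝ) a) :
    connectedComponentIn (Ico (0:ℝ) a ∪ Ioc b 1) x = Ico 0 a := by
  apply Subset.antisymm
  · intro y hy
    rcases connectedComponentIn_subset _ _ hy with h | h
    · exact h
    · exfalso
      have hoc := (isPreconnected_connectedComponentIn
        (x := x) (F := Ico (0:ℝ) a ∪ Ioc b 1)).ordConnected
      have := hoc.out (mem_connectedComponentIn (Or.inl hx)) hy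
        (show a ∈ Icc x y from ⟨hx.2.le, by linarith [h.1]⟩)
      rcases connectedComponentIn_subset _ _ this with h' | h'
      · exact lt_irrefl _ h'.2
      · linarith [h'.1]
  · exact isPreconnected_Ico.subset_connectedComponentIn hx subset_union_left

lemma comp_right {a b x : ℝ} (hab : a < b) (hx : x ∈ Ioc b (1:ℝ)) :
    connectedComponentIn (Ico (0:ℝ) a ∪ Ioc b 1) x = Ioc b 1 := by
  apply Subset.antisymm
  · intro y hy
    rcases connectedComponentIn_subset _ _ hy with h | h
    · exfalso
      have hoc := (isPreconnected_connectedComponentIn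
        (x := x) (F := Ico (0:ℝ) a ∪ Ioc b 1)).ordConnected
      have := hoc.out hy (mem_connectedComponentIn (Or.inr hx))
        (show b ∈ Icc y x from ⟨by linarith [h.2], hx.1.le⟩)
      rcases connectedComponentIn_subset _ _ this with h' | h'
      · linarith [h'.2]
      · exact lt_irrefl _ h'.1
    · exact h
  · exact isPreconnected_Ioc.subset_connectedComponentIn hx subset_union_right

/-- two inflection points `θ^L < θ^H`; if the two tangency
conditions hold at `θ_*^L < θ_*^H` in `(θ^L,θ^H)`, then the pooling set
`[0,θ_*^L) ∪ (θ_*^H,1]` is optimal for `u`; moreover `m_*^L ∈ (0,θ^L)` and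
`m_*^H ∈ (θ^H,1)`. -/
theorem two_sided_pooling_optimal (f : ℝ → ℝ) (hf : IsDensity f)
    (u u' u'' : ℝ → ℝ) (hu : C1AC u u' u'')
    (θL θH : ℝ) (hθL : θL ∈ Ioo (0:ℝ) 1) (hθH : θH ∈ Ioo (0:ℝ) 1) (hLH : θL < θH)
    (hneg1 : ∀ θ ∈ Ico (0:ℝ) θL, u'' θ < 0)
    (hpos : ∀ θ ∈ Ioo θL θH, 0 < u'' θ)
    (hneg2 : ∀ θ ∈ Ioc θH (1:ℝ), u'' θ < 0)
    (θsL θsH : ℝ) (h1 : θsL ∈ Ioo θL θH) (h2 : θsH ∈ Ioo θL θH) (h12 : θsL < θsH)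
    (htanL : u (condMean f 0 θsL) +
        u' (condMean f 0 θsL) * (θsL - condMean f 0 θsL) = u θsL)
    (htanH : u (condMean f θsH 1) +
        u' (condMean f θsH 1) * (θsH - condMean f θsH 1) = u θsH) :
    IsOptimal f u (Ico (0:ℝ) θsL ∪ Ioc θsH 1) ∧
    condMean f 0 θsL ∈ Ioo 0 θL ∧ condMean f θsH 1 ∈ Ioo θH 1 := by
  obtain ⟨hd, hc', hi'', hft⟩ := hu
  have hcu : ContinuousOn u (Icc 0 1) := fun x hx => (hd x hx).continuousAt.continuousWithinAt
  have hdiff : ∀ x y, 0 ≤ x → x ≤ y → y ≤ 1 → u' y - u' x = ∫ t in x..y, u'' t := by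
    intro x y hx hxy hy
    rw [hft x ⟨hx, hxy.trans hy⟩, hft y ⟨hx.trans hxy, hy⟩,
      ← intervalIntegral.integral_add_adjacent_intervals (ii_of hi'' le_rfl hx (hxy.trans hy))
        (ii_of hi'' hx hxy hy)]
    ring
  obtain ⟨hL0, hL1⟩ := hθL
  obtain ⟨hH0, hH1⟩ := hθH
  obtain ⟨h1a, h1b⟩ := h1
  obtain ⟨h2a, h2b⟩ := h2
  have mono : StrictMonoOn u' (Icc θL θH) := by
    intro x hx y hy hxy
    have := hdiff x y (by linarith [hx.1]) hxy.le (by linarith [hy.2])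
    have h := intervalIntegral.intervalIntegral_pos_of_pos_on
      (ii_of hi'' (show 0 ≤ x by linarith [hx.1]) hxy.le (by linarith [hy.2]))
      (fun t ht => hpos t ⟨by linarith [hx.1, ht.1], by linarith [hy.2, ht.2]⟩) hxy
    linarith
  have anti1 : StrictAntiOn u' (Icc 0 θL) := by
    intro x hx y hy hxy
    have := hdiff x y (by linarith [hx.1]) hxy.le (by linarith [hy.2])
    have h := intervalIntegral.intervalIntegral_pos_of_pos_on
      (ii_of hi'' (show 0 ≤ x by linarith [hx.1]) hxy.le (by linarith [hy.2])).neg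
      (fun t ht => neg_pos.2 (hneg1 t ⟨by linarith [hx.1, ht.1], by linarith [hy.2, ht.2]⟩)) hxy
    simp only [Pi.neg_apply, intervalIntegral.integral_neg] at h
    linarith
  have anti2 : StrictAntiOn u' (Icc θH 1) := by
    intro x hx y hy hxy
    have := hdiff x y (by linarith [hx.1]) hxy.le (by linarith [hy.2])
    have h := intervalIntegral.intervalIntegral_pos_of_pos_on
      (ii_of hi'' (show 0 ≤ x by linarith [hx.1]) hxy.le (by linarith [hy.2])).neg
      (fun t ht => neg_pos.2 (hneg2 t ⟨by linarith [hx.1, ht.1], by linarith [hy.2, ht.2]⟩)) hxy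
    simp only [Pi.neg_apply, intervalIntegral.integral_neg] at h
    linarith
  have cvx : ∀ x ∈ Icc θL θH, ∀ y ∈ Icc θL θH, x ≠ y → u x + u' x * (y - x) < u y :=
    fun x hx y hy h => tan_lt (fun z hz => hd z ⟨by linarith [hz.1], by linarith [hz.2]⟩)
      mono hx hy h
  have ccv1 : ∀ x ∈ Icc 0 θL, ∀ y ∈ Icc 0 θL, x ≠ y → u y < u x + u' x * (y - x) :=
    fun x hx y hy h => tan_gt (fun z hz => hd z ⟨by linarith [hz.1], by linarith [hz.2]⟩)
      anti1 hx hy h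
  have ccv2 : ∀ x ∈ Icc θH 1, ∀ y ∈ Icc θH 1, x ≠ y → u y < u x + u' x * (y - x) :=
    fun x hx y hy h => tan_gt (fun z hz => hd z ⟨by linarith [hz.1], by linarith [hz.2]⟩)
      anti2 hx hy h
  have cvx' : ∀ x ∈ Icc θL θH, ∀ y ∈ Icc θL θH, u x + u' x * (y - x) ≤ u y := by
    intro x hx y hy
    rcases eq_or_ne x y with rfl | h
    · simp
    · exact (cvx x hx y hy h).le
  have haffL := affine_int hf le_rfl (show 0 < θsL by linarith) (by linarith)
    (u (condMean f 0 θsL)) (u' (condMean f 0 θsL))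
  have haffH := affine_int hf (show 0 ≤ θsH by linarith) (show θsH < 1 by linarith) le_rfl
    (u (condMean f θsH 1)) (u' (condMean f θsH 1))
  have hmL := condMean_mem hf le_rfl (show 0 < θsL by linarith) (by linarith)
  have hmH := condMean_mem hf (show 0 ≤ θsH by linarith) (show θsH < 1 by linarith) le_rfl
  have hpmL : ∀ x ∈ Ico 0 θsL, poolMean f (Ico (0:ℝ) θsL ∪ Ioc θsH 1) x = condMean f 0 θsL := by
    intro x hx
    rw [poolMean, if_pos (mem_union_left _ hx), compInf, compSup, comp_left (by linarith) h12 hx,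
      csInf_Ico (by linarith), csSup_Ico (by linarith)]
  have hpmH : ∀ x ∈ Ioc θsH 1, poolMean f (Ico (0:ℝ) θsL ∪ Ioc θsH 1) x = condMean f θsH 1 := by
    intro x hx
    rw [poolMean, if_pos (mem_union_right _ hx), compInf, compSup, comp_right h12 hx,
      csInf_Ioc (by linarith), csSup_Ioc (by linarith)]
  set mL := condMean f 0 θsL
  set mH := condMean f θsH 1
  have mL_lt : mL < θL := by
    by_contra h
    push Not at h
    have := cvx mL ⟨h, by linarith [hmL.2]⟩ θsL ⟨h1a.le, h1b.le⟩ hmL.2.ne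
    linarith
  have mH_gt : θH < mH := by
    by_contra h
    push Not at h
    have := cvx mH ⟨by linarith [hmH.1], h⟩ θsH ⟨h2a.le, h2b.le⟩ hmH.1.ne'
    linarith
  refine ⟨?_, ⟨hmL.1, mL_lt⟩, ⟨mH_gt, hmH.2⟩⟩
  have hPS : IsPoolingSet (Ico (0:ℝ) θsL ∪ Ioc θsH 1) := by
    refine ⟨Iio θsL ∪ Ioi θsH, isOpen_Iio.union isOpen_Ioi, ?_⟩
    ext x
    simp only [mem_union, mem_Ico, mem_Ioc, mem_inter_iff, mem_Iio, mem_Ioi, mem_Icc]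
    constructor
    · rintro (⟨a, b⟩ | ⟨a, b⟩)
      · exact ⟨Or.inl b, a, by linarith⟩
      · exact ⟨Or.inr a, by linarith, b⟩
    · rintro ⟨a | a, b, c⟩
      · exact Or.inl ⟨b, a⟩
      · exact Or.inr ⟨a, c⟩
  refine ⟨hPS, fun Q hQ => ?_⟩
  -- slope inequalities
  have tL1 := ccv1 mL ⟨hmL.1.le, mL_lt.le⟩ θL ⟨hL0.le, le_rfl⟩ mL_lt.ne
  have tH1 := ccv2 mH ⟨mH_gt.le, hmH.2.le⟩ θH ⟨le_rfl, hH1.le⟩ mH_gt.ne'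
  have tL2 := cvx θsL ⟨h1a.le, h1b.le⟩ θL ⟨le_rfl, hLH.le⟩ h1a.ne'
  have tH2 := cvx θsH ⟨h2a.le, h2b.le⟩ θH ⟨hLH.le, le_rfl⟩ h2b.ne
  have slL : u' mL < u' θsL := by
    by_contra h
    push Not at h
    have := mul_nonneg (sub_nonneg.2 h) (sub_nonneg.2 h1a.le)
    linarith
  have slH : u' θsH < u' mH := by
    by_contra h
    push Not at h
    have := mul_nonneg (sub_nonneg.2 h) (sub_nonneg.2 h2b.le)
    linarith
  have leL : ∀ t, 0 ≤ t → t ≤ θsL → u t ≤ u mL + u' mL * (t - mL) := by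
    intro t h0 hs
    rcases le_total t θL with h | h
    · rcases eq_or_ne mL t with e | e
      · rw [← e]; simp
      · exact (ccv1 mL ⟨hmL.1.le, mL_lt.le⟩ t ⟨h0, h⟩ e).le
    · have e1 := cvx' t ⟨h, by linarith⟩ θL ⟨le_rfl, hLH.le⟩
      have e2 := cvx' t ⟨h, by linarith⟩ θsL ⟨h1a.le, h1b.le⟩
      exact chord_le (w := u' t) h hs h1a (by linarith) (by linarith)
  have leH : ∀ t, θsH ≤ t → t ≤ 1 → u t ≤ u mH + u' mH * (t - mH) := by
    intro t hs h0
    rcases le_total θH t with h | h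
    · rcases eq_or_ne mH t with e | e
      · rw [← e]; simp
      · exact (ccv2 mH ⟨mH_gt.le, hmH.2.le⟩ t ⟨h, h0⟩ e).le
    · have e1 := cvx' t ⟨by linarith, h⟩ θH ⟨hLH.le, le_rfl⟩
      have e2 := cvx' t ⟨by linarith, h⟩ θsH ⟨h2a.le, h2b.le⟩
      exact chord_le (w := u' t) hs h h2b (by linarith) (by linarith)
  -- the price function
  let p : ℝ → ℝ := fun t => if t ≤ θsL then u mL + u' mL * (t - mL)
    else if t ≤ θsH then u t else u mH + u' mH * (t - mH)
  have pL : ∀ t, t ≤ θsL → p t = u mL + u' mL * (t - mL) := fun t ht => if_pos ht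
  have pM : ∀ t, θsL < t → t ≤ θsH → p t = u t := fun t ht ht' => by
    simp only [p]; rw [if_neg (not_le.2 ht), if_pos ht']
  have pH : ∀ t, θsH < t → p t = u mH + u' mH * (t - mH) := fun t ht => by
    simp only [p]; rw [if_neg (by linarith), if_neg (by linarith)]
  have iL : IntervalIntegrable (fun t => p t * f t) volume 0 θsL := by
    refine (ii_of (io_mul hf (g := fun t => u mL + u' mL * (t - mL)) (by fun_prop)) le_rfl
      (by linarith) (by linarith)).congr_uIoo ?_
    rw [uIoo_of_le (by linarith)]
    intro t ht
    simp only [pL t ht.2.le]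
  have iM : IntervalIntegrable (fun t => p t * f t) volume θsL θsH := by
    refine (ii_of (io_mul hf hcu) (by linarith) (by linarith) (by linarith)).congr_uIoo ?_
    rw [uIoo_of_le (by linarith)]
    intro t ht
    simp only [pM t ht.1 ht.2.le]
  have iH : IntervalIntegrable (fun t => p t * f t) volume θsH 1 := by
    refine (ii_of (io_mul hf (g := fun t => u mH + u' mH * (t - mH)) (by fun_prop)) (by linarith)
      (by linarith) le_rfl).congr_uIoo ?_
    rw [uIoo_of_le (by linarith)]
    intro t ht
    simp only [pH t ht.1]
  have hpi : IntegrableOn (fun t => p t * f t) (Icc 0 1) := by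
    rw [← intervalIntegrable_iff_integrableOn_Icc_of_le zero_le_one]
    exact (iL.trans iM).trans iH
  have hle := pool_le hf hcu hpi ?_ hQ
  · refine hle.trans (le_of_eq ?_)
    have hint := pool_integrable hf hcu hPS
    rw [poolValue, ← intervalIntegral.integral_add_adjacent_intervals (iL.trans iM) iH,
      ← intervalIntegral.integral_add_adjacent_intervals iL iM,
      ← intervalIntegral.integral_add_adjacent_intervals
        (ii_of hint le_rfl (show 0 ≤ θsH by linarith) (by linarith))
        (ii_of hint (by linarith) (by linarith) le_rfl),
      ← intervalIntegral.integral_add_adjacent_intervals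
        (ii_of hint le_rfl (show 0 ≤ θsL by linarith) (by linarith))
        (ii_of hint (by linarith) (by linarith) (by linarith))]
    congr 1
    · congr 1
      · rw [intervalIntegral.integral_congr_Ioo_of_le
            (g := fun t => (u mL + u' mL * (t - mL)) * f t) (by linarith)
            (fun t ht => by simp only [pL t ht.2.le]),
          intervalIntegral.integral_congr_Ioo_of_le
            (f := fun t => u (poolMean f (Ico (0:ℝ) θsL ∪ Ioc θsH 1) t) * f t)
            (g := fun t => u mL * f t) (by linarith)
            (fun t ht => by simp only [hpmL t ⟨ht.1.le, ht.2⟩]),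
          intervalIntegral.integral_const_mul]
        exact haffL
      · refine intervalIntegral.integral_congr_Ioo_of_le (by linarith) fun t ht => ?_
        have : t ∉ Ico (0:ℝ) θsL ∪ Ioc θsH 1 := by
          rintro (h | h)
          · linarith [h.2, ht.1]
          · linarith [h.1, ht.2]
        simp only [pM t ht.1 ht.2.le, poolMean, if_neg this]
    · rw [intervalIntegral.integral_congr_Ioo_of_le
            (g := fun t => (u mH + u' mH * (t - mH)) * f t) (by linarith)
            (fun t ht => by simp only [pH t ht.1]),
          intervalIntegral.integral_congr_Ioo_of_le
            (f := fun t => u (poolMean f (Ico (0:ℝ) θsL ∪ Ioc θsH 1) t) * f t)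
            (g := fun t => u mH * f t) (by linarith)
            (fun t ht => by simp only [hpmH t ⟨ht.1, ht.2.le⟩]),
          intervalIntegral.integral_const_mul]
      exact haffH
  · -- supporting lines; first a general reduction for lines lying below `u` on the middle
    have red : ∀ A B : ℝ, u' mL ≤ B → B ≤ u' mH →
        (∀ t ∈ Icc θsL θsH, A + B * t ≤ u t) → ∀ t, A + B * t ≤ p t := by
      intro A B hB1 hB2 hA t
      rcases le_or_gt t θsL with h | h
      · rw [pL t h]
        have := hA θsL ⟨le_rfl, h12.le⟩
        have := mul_nonneg (sub_nonneg.2 hB1) (sub_nonneg.2 h)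
        linarith
      rcases le_or_gt t θsH with h' | h'
      · rw [pM t h h']
        exact hA t ⟨h.le, h'⟩
      · rw [pH t h']
        have := hA θsH ⟨h12.le, le_rfl⟩
        have := mul_nonneg (sub_nonneg.2 hB2) (sub_nonneg.2 h'.le)
        linarith
    have slM : u' θsL < u' θsH := mono ⟨h1a.le, h1b.le⟩ ⟨h2a.le, h2b.le⟩ h12
    intro m hm
    rcases le_or_gt m θsL with h | h
    · refine ⟨u' mL, fun t _ => ?_⟩
      have := red (u mL - u' mL * mL) (u' mL) le_rfl (by linarith) (fun t ht => by
        have e1 := cvx' θsL ⟨h1a.le, h1b.le⟩ t ⟨by linarith [ht.1], by linarith [ht.2]⟩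
        have e2 := mul_nonneg (sub_nonneg.2 slL.le) (sub_nonneg.2 ht.1)
        linarith) t
      have := leL m hm.1 h
      linarith
    rcases le_or_gt m θsH with h' | h'
    · refine ⟨u' m, fun t _ => ?_⟩
      have hmI : m ∈ Icc θL θH := ⟨by linarith, by linarith⟩
      have m1 := mono.monotoneOn ⟨h1a.le, h1b.le⟩ hmI h.le
      have m2 := mono.monotoneOn hmI ⟨h2a.le, h2b.le⟩ h'
      have := red (u m - u' m * m) (u' m) (by linarith) (by linarith) (fun t ht => by
        have e1 := cvx' m hmI t ⟨by linarith [ht.1], by linarith [ht.2]⟩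
        linarith) t
      linarith
    · refine ⟨u' mH, fun t _ => ?_⟩
      have := red (u mH - u' mH * mH) (u' mH) (by linarith) le_rfl (fun t ht => by
        have e1 := cvx' θsH ⟨h2a.le, h2b.le⟩ t ⟨by linarith [ht.1], by linarith [ht.2]⟩
        have e2 := mul_nonneg (sub_nonneg.2 slH.le) (sub_nonneg.2 ht.2)
        linarith) t
      have := leH m h'.le hm.2
      linarith
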